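/- Let M₀, B, ε₀ > 0 with ε₀ < M₀. Then there exist constants c, C > 0, depending only on M₀, B, ε₀, with the following property. Let u : ℝ² → ℂ be 2π-periodic and C¹ with |u|⁴ and ‖∇u‖² integrable on Q, and let n, v : ℝ² → ℝ be 2π-periodic with n², v² integrable on Q. Assume the Gagliardo–Nirenberg inequality ∫_Q |u|⁴ dx ≤ ( 2 M₀^{−1} ∫_Q ‖∇u‖² dx + B ∫_Q |u|² dx ) · ( ∫_Q |u|² dx ) and that ∫_Q |u|² dx = M₀ − ε₀. Then c ( ∫_Q |u|² + ∫_Q ‖∇u‖² + ∫_Q n² + ∫_Q v² ) ≤ E(u,n,v) + M₀ B ∫_Q |u|² dx ≤ C ( ∫_Q |u|² + ∫_Q ‖∇u‖² + ∫_Q n² + ∫_Q v² ). -/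

import Mathlib

open MeasureTheory Real Set

noncomputable section

abbrev R2 := EuclideanSpace ℝ (Fin 2)

def Q2 : Set R2 := {x | ∀ i, x i ∈ Icc (-π) π}

def Periodic2 {E : Type*} (f : R2 → E) : Prop :=
  ∀ (x : R2) (k : Fin 2 → ℤ),
    f (x + (EuclideanSpace.equiv (Fin 2) ℝ).symm (fun i => 2 * π * (k i : ℝ))) = f x
/-- The Zakharov energy 𝓔(u,n,v). -/
noncomputable def zakharovEnergy (u : R2 → ℂ) (n v : R2 → ℝ) : ℝ :=
  (∫ x in Q2, ‖fderiv ℝ u x‖ ^ 2) + (1/2) * (∫ x in Q2, (n x) ^ 2)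
    + (1/2) * (∫ x in Q2, (v x) ^ 2) + ∫ x in Q2, n x * ‖u x‖ ^ 2
lemma cross_bound (u : R2 → ℂ) (n : R2 → ℝ) (hn : Measurable n) (hu : ContDiff ℝ 1 u)
    (h4 : IntegrableOn (fun x => ‖u x‖ ^ 4) Q2) (h2 : IntegrableOn (fun x => (n x) ^ 2) Q2)
    (t : ℝ) (ht : 0 < t) :
    |∫ x in Q2, n x * ‖u x‖ ^ 2| ≤
      t / 2 * (∫ x in Q2, (n x) ^ 2) + 1 / (2 * t) * (∫ x in Q2, ‖u x‖ ^ 4) := by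
  have hi : IntegrableOn (fun x => t / 2 * (n x) ^ 2 + 1 / (2 * t) * ‖u x‖ ^ 4) Q2 :=
    (h2.const_mul _).add (h4.const_mul _)
  rw [← integral_const_mul, ← integral_const_mul,
    ← integral_add (h2.const_mul _) (h4.const_mul _), ← Real.norm_eq_abs]
  refine norm_integral_le_of_norm_le hi (Filter.Eventually.of_forall fun x => ?_)
  have key : t / 2 * (n x) ^ 2 + 1 / (2 * t) * ‖u x‖ ^ 4 - |n x| * ‖u x‖ ^ 2
      = (t * |n x| - ‖u x‖ ^ 2) ^ 2 / (2 * t) := by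
    rw [← sq_abs (n x)]
    field_simp
    ring
  have : 0 ≤ (t * |n x| - ‖u x‖ ^ 2) ^ 2 / (2 * t) := by positivity
  rw [norm_mul, Real.norm_eq_abs, norm_pow, norm_norm]
  linarith

/-- Lemma 5.2(i): below the critical mass the shifted energy is equivalent to the
square of the H¹ × L² × L² norm. -/
theorem stmt12 (M₀ B ε₀ : ℝ) (hM : 0 < M₀) (hB : 0 < B) (hε : 0 < ε₀) (hεM : ε₀ < M₀) :
    ∃ c > 0, ∃ C > 0, ∀ (u : R2 → ℂ) (n v : R2 → ℝ),
      Periodic2 u → Periodic2 n → Periodic2 v →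
      Measurable n → Measurable v →
      ContDiff ℝ 1 u →
      IntegrableOn (fun x => ‖u x‖ ^ 4) Q2 →
      IntegrableOn (fun x => ‖fderiv ℝ u x‖ ^ 2) Q2 →
      IntegrableOn (fun x => (n x) ^ 2) Q2 →
      IntegrableOn (fun x => (v x) ^ 2) Q2 →
      ((∫ x in Q2, ‖u x‖ ^ 4) ≤
        (2 * M₀⁻¹ * (∫ x in Q2, ‖fderiv ℝ u x‖ ^ 2) + B * (∫ x in Q2, ‖u x‖ ^ 2)) *
          (∫ x in Q2, ‖u x‖ ^ 2)) →
      (∫ x in Q2, ‖u x‖ ^ 2) = M₀ - ε₀ →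
      c * ((∫ x in Q2, ‖u x‖ ^ 2) + (∫ x in Q2, ‖fderiv ℝ u x‖ ^ 2)
            + (∫ x in Q2, (n x) ^ 2) + (∫ x in Q2, (v x) ^ 2))
          ≤ zakharovEnergy u n v + M₀ * B * (∫ x in Q2, ‖u x‖ ^ 2) ∧
        zakharovEnergy u n v + M₀ * B * (∫ x in Q2, ‖u x‖ ^ 2)
          ≤ C * ((∫ x in Q2, ‖u x‖ ^ 2) + (∫ x in Q2, ‖fderiv ℝ u x‖ ^ 2)
            + (∫ x in Q2, (n x) ^ 2) + (∫ x in Q2, (v x) ^ 2)) := by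
  refine ⟨min (ε₀ / (4 * M₀)) (M₀ * B / 2), by positivity, 2 + 2 * (M₀ * B), by positivity, ?_⟩
  intro u n v _ _ _ hn _ hu h4 _ h2 _ hGN hm
  have hG : 0 ≤ ∫ x in Q2, ‖fderiv ℝ u x‖ ^ 2 := integral_nonneg fun x => by positivity
  have hN : 0 ≤ ∫ x in Q2, (n x) ^ 2 := integral_nonneg fun x => by positivity
  have hV : 0 ≤ ∫ x in Q2, (v x) ^ 2 := integral_nonneg fun x => by positivity
  have hI := cross_bound u n hn hu h4 h2
  unfold zakharovEnergy
  generalize (∫ x in Q2, ‖fderiv ℝ u x‖ ^ 2) = G at *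
  generalize (∫ x in Q2, (n x) ^ 2) = N at *
  generalize (∫ x in Q2, (v x) ^ 2) = V at *
  generalize (∫ x in Q2, ‖u x‖ ^ 4) = F at *
  generalize (∫ x in Q2, n x * ‖u x‖ ^ 2) = I at *
  generalize (∫ x in Q2, ‖u x‖ ^ 2) = m at *
  have hm0 : 0 < m := by linarith
  have hmM : m < M₀ := by linarith
  have hε' : ε₀ = M₀ - m := by linarith
  subst hε'
  constructor
  · have h := neg_le_of_abs_le (hI ((m + M₀) / (2 * M₀)) (by positivity))
    have hF : 1 / (2 * ((m + M₀) / (2 * M₀))) * F ≤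
        2 * m / (m + M₀) * G + B * m * (m * M₀ / (m + M₀)) := by
      calc _ ≤ 1 / (2 * ((m + M₀) / (2 * M₀))) * ((2 * M₀⁻¹ * G + B * m) * m) := by gcongr
        _ = _ := by field_simp
    have e1 : m * M₀ / (m + M₀) ≤ M₀ / 2 := by
      rw [div_le_div_iff₀ (by positivity) (by positivity)]; nlinarith
    have e2 : B * m * (m * M₀ / (m + M₀)) ≤ B * m * (M₀ / 2) := by gcongr
    have e3 : (M₀ - m) / (4 * M₀) ≤ 1 - 2 * m / (m + M₀) := by
      rw [show 1 - 2 * m / (m + M₀) = (M₀ - m) / (m + M₀) by field_simp; ring]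
      gcongr
      · linarith
    have e4 : (M₀ - m) / (4 * M₀) = 1 / 2 - (m + M₀) / (2 * M₀) / 2 := by
      field_simp; ring
    have e5 : (M₀ - m) / (4 * M₀) ≤ 1 / 2 := by
      rw [div_le_div_iff₀ (by positivity) (by positivity)]; nlinarith
    have c1 := min_le_left ((M₀ - m) / (4 * M₀)) (M₀ * B / 2)
    have c2 := min_le_right ((M₀ - m) / (4 * M₀)) (M₀ * B / 2)
    generalize min ((M₀ - m) / (4 * M₀)) (M₀ * B / 2) = c at *
    have f1 := mul_le_mul_of_nonneg_right c2 hm0.le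
    have f2 := mul_le_mul_of_nonneg_right (c1.trans e3) hG
    have f3 := mul_le_mul_of_nonneg_right (c1.trans e4.le) hN
    have f4 := mul_le_mul_of_nonneg_right (c1.trans e5) hV
    linarith
  · have h := le_of_abs_le (hI 1 one_pos)
    have hF : (2 * M₀⁻¹ * G + B * m) * m ≤ 2 * G + B * m * M₀ := by
      have : M₀⁻¹ * m ≤ 1 := by rw [inv_mul_le_iff₀ hM]; linarith
      have := mul_le_mul_of_nonneg_right this hG
      have : B * m * m ≤ B * m * M₀ := by gcongr
      linarith
    have p1 : 0 ≤ M₀ * B * m := by positivity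
    have p2 : 0 ≤ M₀ * B * G := by positivity
    have p3 : 0 ≤ M₀ * B * N := by positivity
    have p4 : 0 ≤ M₀ * B * V := by positivity
    linarith
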